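/- arXiv:2211.11835 — 2 statements merged into one kernel-verified Lean document; each statement's English description precedes it below -/
import Mathlib

section
/- (Corollary 6.3) Suppose 0 ≤ ε ≤ (μ₊−μ₋)/4, ln K ≤ (μ₊−μ₋−2ε)²/2, and (K + 1/K + 2)·ε ≤ μ₊−μ₋. Then the boundary errors are ordered as E_bdy(θ_f, ε) ≥ E_bdy(θ*, ε) ≥ E_bdy(θ_r(ε), ε), where θ_f = μ₋ + (μ₊−μ₋)/(K+1), θ* = μ₋ − (μ₊−μ₋)/(K²−1) + (K/(K²−1))·√(2(K²−1)·ln K + (μ₊−μ₋)²), and θ_r(ε) = μ₋ − (μ₊−μ₋−(K²+1)ε)/(K²−1) + (K/(K²−1))·√(2(K²−1)·ln K + (μ₊−μ₋−2ε)²). -/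
/-!
The derivative of the boundary error in `θ` is
`(φ₊(θ+ε) - φ₊(θ) + φ₋(θ) - φ₋(θ-ε)) / 2`, and the thresholds satisfy `θ_f ≤ θ* ≤ θ_r ≤ μ₊ - ε`;
it therefore suffices that this derivative is nonpositive on `[θ_f, θ_r]`.

Comparing densities is a quadratic condition: `φ₊(b) ≤ φ₋(a)` iff
`K² (a-μ₋)² - (b-μ₊)² ≤ 2 K² ln K` (`phiP_le_phiM_iff`), with equality at `a = b = θ*` and at
`a = θ_r - ε`, `b = θ_r + ε` (`root_identity`).

* On `[θ*, θ_r]` both `φ₊(θ+ε) ≤ φ₋(θ-ε)` and `φ₋(θ) ≤ φ₊(θ)` hold.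
* On `[θ_f, θ*]` the function `t ↦ φ₊(θ+t) - φ₋(θ-t)` is antitone on `[0, ε]`
  (`diff_le_of_le_nat`), because `φ₊(θ+t) ≤ φ₋(θ-t)` there and the logarithmic slopes
  satisfy `(μ₊-θ-t)/K² ≤ θ-t-μ₋`. At `θ = θ_f` the latter is exactly `(K + 1/K + 2) t ≤ μ₊-μ₋`.
-/

open Real MeasureTheory Set

/-- Density of the Gaussian N(μm, 1). -/
noncomputable def phiM (μm x : ℝ) : ℝ :=
  (1 / Real.sqrt (2 * Real.pi)) * Real.exp (-(x - μm) ^ 2 / 2)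

/-- Density of the Gaussian N(μp, K²). -/
noncomputable def phiP (μp K x : ℝ) : ℝ :=
  (1 / (Real.sqrt (2 * Real.pi) * K)) * Real.exp (-(x - μp) ^ 2 / (2 * K ^ 2))

/-- Boundary error of the threshold classifier at θ under ε-perturbations. -/
noncomputable def Ebdy (μm μp K θ ε : ℝ) : ℝ :=
  (1 / 2) * (∫ x in Ioc θ (θ + ε), phiP μp K x) +
    (1 / 2) * (∫ x in Ioc (θ - ε) θ, phiM μm x)

/-- Threshold of the optimal fair classifier. -/
noncomputable def θfair (μm μp K : ℝ) : ℝ := μm + (μp - μm) / (K + 1)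

/-- Threshold of the optimal natural (Bayes) classifier. -/
noncomputable def θnat (μm μp K : ℝ) : ℝ :=
  μm - (μp - μm) / (K ^ 2 - 1) +
    (K / (K ^ 2 - 1)) * Real.sqrt (2 * (K ^ 2 - 1) * Real.log K + (μp - μm) ^ 2)

/-- Threshold of the optimal ε-robust classifier. -/
noncomputable def θrob (μm μp K ε : ℝ) : ℝ :=
  μm - (μp - μm - (K ^ 2 + 1) * ε) / (K ^ 2 - 1) +
    (K / (K ^ 2 - 1)) * Real.sqrt (2 * (K ^ 2 - 1) * Real.log K + (μp - μm - 2 * ε) ^ 2)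

lemma phiM_hasDerivAt (μm x : ℝ) :
    HasDerivAt (phiM μm) (-(x - μm) * phiM μm x) x := by
  have h : HasDerivAt (fun x : ℝ => -(x - μm) ^ 2 / 2) (-(x - μm)) x := by
    have := ((((hasDerivAt_id x).sub_const μm).pow 2).neg).div_const 2
    refine this.congr_deriv ?_
    simp
    ring
  refine (h.exp.const_mul (1 / Real.sqrt (2 * Real.pi))).congr_deriv ?_
  unfold phiM
  ring

lemma phiP_hasDerivAt (μp K x : ℝ) :
    HasDerivAt (phiP μp K) ((μp - x) / K ^ 2 * phiP μp K x) x := by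
  have h : HasDerivAt (fun x : ℝ => -(x - μp) ^ 2 / (2 * K ^ 2)) ((μp - x) / K ^ 2) x := by
    have := ((((hasDerivAt_id x).sub_const μp).pow 2).neg).div_const (2 * K ^ 2)
    refine this.congr_deriv ?_
    by_cases hK : K = 0
    · simp [hK]
    · simp; field_simp; ring
  refine (h.exp.const_mul (1 / (Real.sqrt (2 * Real.pi) * K))).congr_deriv ?_
  unfold phiP
  ring

lemma phiM_continuous (μm : ℝ) : Continuous (phiM μm) := by
  unfold phiM; fun_prop

lemma phiP_continuous (μp K : ℝ) : Continuous (phiP μp K) := by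
  unfold phiP; fun_prop

lemma phiP_nonneg (μp K x : ℝ) (hK : 1 < K) : 0 ≤ phiP μp K x := by
  unfold phiP; positivity

lemma phiP_eq (μp K x : ℝ) (hK : 1 < K) :
    phiP μp K x =
      (1 / Real.sqrt (2 * Real.pi)) * Real.exp (-Real.log K - (x - μp) ^ 2 / (2 * K ^ 2)) := by
  unfold phiP
  rw [sub_eq_add_neg (-Real.log K), Real.exp_add, Real.exp_neg (Real.log K),
    Real.exp_log (by linarith), neg_div, one_div, mul_inv, one_div, mul_assoc]

lemma phiP_le_phiM_iff (μm μp K a b : ℝ) (hK : 1 < K) :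
    phiP μp K b ≤ phiM μm a ↔
      K ^ 2 * (a - μm) ^ 2 - (b - μp) ^ 2 ≤ 2 * K ^ 2 * Real.log K := by
  have hc : 0 < 1 / Real.sqrt (2 * Real.pi) := by positivity
  have hK2 : 0 < 2 * K ^ 2 := by positivity
  rw [phiP_eq μp K b hK, phiM, mul_le_mul_iff_right₀ hc, Real.exp_le_exp,
    ← mul_le_mul_iff_right₀ hK2]
  have e : 2 * K ^ 2 * (-Real.log K - (b - μp) ^ 2 / (2 * K ^ 2)) =
      -(2 * K ^ 2 * Real.log K) - (b - μp) ^ 2 := by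
    field_simp
  rw [e]
  constructor <;> intro h <;> linarith

lemma phiM_le_phiP_iff (μm μp K a b : ℝ) (hK : 1 < K) :
    phiM μm a ≤ phiP μp K b ↔
      2 * K ^ 2 * Real.log K ≤ K ^ 2 * (a - μm) ^ 2 - (b - μp) ^ 2 := by
  have hc : 0 < 1 / Real.sqrt (2 * Real.pi) := by positivity
  have hK2 : 0 < 2 * K ^ 2 := by positivity
  rw [phiP_eq μp K b hK, phiM, mul_le_mul_iff_right₀ hc, Real.exp_le_exp,
    ← mul_le_mul_iff_right₀ hK2]
  have e : 2 * K ^ 2 * (-Real.log K - (b - μp) ^ 2 / (2 * K ^ 2)) =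
      -(2 * K ^ 2 * Real.log K) - (b - μp) ^ 2 := by
    field_simp
  rw [e]
  constructor <;> intro h <;> linarith

lemma Ebdy_eq (μm μp K θ ε : ℝ) (hε : 0 ≤ ε) :
    Ebdy μm μp K θ ε =
      (1 / 2) * ((∫ x in (0 : ℝ)..(θ + ε), phiP μp K x) - ∫ x in (0 : ℝ)..θ, phiP μp K x) +
      (1 / 2) * ((∫ x in (0 : ℝ)..θ, phiM μm x) - ∫ x in (0 : ℝ)..(θ - ε), phiM μm x) := by
  have hP := fun a b => (phiP_continuous μp K).intervalIntegrable (μ := volume) a b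
  have hM := fun a b => (phiM_continuous μm).intervalIntegrable (μ := volume) a b
  rw [intervalIntegral.integral_interval_sub_left (hP _ _) (hP _ _),
    intervalIntegral.integral_interval_sub_left (hM _ _) (hM _ _),
    intervalIntegral.integral_of_le (by linarith), intervalIntegral.integral_of_le (by linarith)]
  rfl

lemma Ebdy_hasDerivAt (μm μp K θ ε : ℝ) (hε : 0 ≤ ε) :
    HasDerivAt (fun θ => Ebdy μm μp K θ ε)
      ((1 / 2) * (phiP μp K (θ + ε) - phiP μp K θ) +
        (1 / 2) * (phiM μm θ - phiM μm (θ - ε))) θ := by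
  have hP := fun b => (phiP_continuous μp K).integral_hasStrictDerivAt 0 b |>.hasDerivAt
  have hM := fun b => (phiM_continuous μm).integral_hasStrictDerivAt 0 b |>.hasDerivAt
  have h := (((hP (θ + ε)).comp_add_const θ ε).sub (hP θ)).const_mul (1 / 2) |>.add
    (((hM θ).sub ((hM (θ - ε)).comp_sub_const θ ε)).const_mul (1 / 2))
  refine h.congr_of_eventuallyEq (Filter.Eventually.of_forall fun x => ?_)
  simpa using Ebdy_eq μm μp K x ε hε

/-- It suffices to control the sign of the `θ`-derivative. -/
lemma Ebdy_le (μm μp K ε a b : ℝ) (hε : 0 ≤ ε) (hab : a ≤ b)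
    (h : ∀ θ ∈ Icc a b, phiP μp K (θ + ε) - phiP μp K θ ≤ phiM μm (θ - ε) - phiM μm θ) :
    Ebdy μm μp K b ε ≤ Ebdy μm μp K a ε := by
  have hanti : AntitoneOn (fun θ => Ebdy μm μp K θ ε) (Icc a b) := by
    refine antitoneOn_of_hasDerivWithinAt_nonpos (convex_Icc a b)
      (fun x _ => (Ebdy_hasDerivAt μm μp K x ε hε).continuousAt.continuousWithinAt)
      (fun x _ => (Ebdy_hasDerivAt μm μp K x ε hε).hasDerivWithinAt) fun x hx => ?_
    have := h x (interior_subset hx)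
    linarith
  exact hanti (left_mem_Icc.2 hab) (right_mem_Icc.2 hab) hab

/-- The larger root of `K² v² - (y - v)² = 2 K² L`. It describes `θ* - μ₋` for `y = μ₊ - μ₋` and
`θ_r - ε - μ₋` for `y = μ₊ - μ₋ - 2ε`. -/
lemma root_identity (K L y v s : ℝ) (hK : 1 < K) (hs : s ^ 2 = 2 * (K ^ 2 - 1) * L + y ^ 2)
    (hv : (K ^ 2 - 1) * v = -y + K * s) :
    K ^ 2 * v ^ 2 - (y - v) ^ 2 = 2 * K ^ 2 * L := by
  have hD : 0 < K ^ 2 - 1 := by nlinarith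
  have h1 : ((K ^ 2 - 1) * v + y) ^ 2 = K ^ 2 * s ^ 2 := by rw [hv]; ring
  refine mul_left_cancel₀ hD.ne' ?_
  rw [hs] at h1
  linear_combination h1

/-- The bound on `ln K` gives `θ* ≤ μ₊` for `y = μ₊ - μ₋` and `θ_r ≤ μ₊ - ε` for
`y = μ₊ - μ₋ - 2ε`. -/
lemma root_le (K L y v s : ℝ) (hK : 1 < K) (hy : 0 ≤ y) (hL : L ≤ y ^ 2 / 2)
    (hs : s ^ 2 = 2 * (K ^ 2 - 1) * L + y ^ 2)
    (hv : (K ^ 2 - 1) * v = -y + K * s) : v ≤ y := by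
  have hD : 0 < K ^ 2 - 1 := by nlinarith
  have h2 : s ≤ K * y := by
    refine le_of_sq_le_sq ?_ (by positivity)
    rw [hs]
    nlinarith [mul_le_mul_of_nonneg_left hL hD.le]
  refine le_of_mul_le_mul_left ?_ hD
  rw [hv]
  nlinarith

/-- The derivative condition to the left of `θ*`. The hypothesis `hr` is the inequality between
logarithmic slopes at `t = ε`, and `hq` says `φ₊(θ) ≤ φ₋(θ)`. -/
lemma diff_le_of_le_nat (μm μp K ε θ : ℝ) (hK : 1 < K) (hε : 0 ≤ ε)
    (hr : μp - θ - ε ≤ K ^ 2 * (θ - ε - μm)) (hp : θ + ε ≤ μp)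
    (hq : K ^ 2 * (θ - μm) ^ 2 - (θ - μp) ^ 2 ≤ 2 * K ^ 2 * Real.log K) :
    phiP μp K (θ + ε) - phiP μp K θ ≤ phiM μm (θ - ε) - phiM μm θ := by
  have hD : 0 < K ^ 2 - 1 := by nlinarith
  have hderiv : ∀ t : ℝ, HasDerivAt (fun t => phiP μp K (θ + t) - phiM μm (θ - t))
      ((μp - (θ + t)) / K ^ 2 * phiP μp K (θ + t) -
        (θ - t - μm) * phiM μm (θ - t)) t := fun t => by
    have h1 := (phiP_hasDerivAt μp K (θ + t)).comp_const_add θ t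
    have h2 := (phiM_hasDerivAt μm (θ - t)).comp_const_sub θ t
    refine (h1.sub h2).congr_deriv ?_
    ring
  have hanti : AntitoneOn (fun t => phiP μp K (θ + t) - phiM μm (θ - t)) (Icc 0 ε) := by
    refine antitoneOn_of_hasDerivWithinAt_nonpos (convex_Icc 0 ε)
      (fun x _ => (hderiv x).continuousAt.continuousWithinAt)
      (fun x _ => (hderiv x).hasDerivWithinAt) fun t ht => ?_
    obtain ⟨ht0, ht1⟩ : t ∈ Icc 0 ε := interior_subset ht
    have hrt : μp - θ - t ≤ K ^ 2 * (θ - t - μm) := by nlinarith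
    have hpt : 0 ≤ μp - (θ + t) := by linarith
    have hpm : phiP μp K (θ + t) ≤ phiM μm (θ - t) := by
      rw [phiP_le_phiM_iff μm μp K _ _ hK]
      -- The quadratic form at `t` is its value at `t = 0` minus this quantity.
      have : 0 ≤ t * (2 * (K ^ 2 * (θ - t - μm) - (μp - θ - t)) + (K ^ 2 - 1) * t) := by
        have : 0 ≤ K ^ 2 * (θ - t - μm) - (μp - θ - t) := by linarith
        positivity
      nlinarith
    have hslope : (μp - (θ + t)) / K ^ 2 ≤ θ - t - μm := by
      rw [div_le_iff₀ (by positivity)]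
      linarith
    have h0 : 0 ≤ (μp - (θ + t)) / K ^ 2 := by positivity
    have := mul_le_mul hslope hpm (phiP_nonneg μp K _ hK) (h0.trans hslope)
    linarith
  have := hanti (left_mem_Icc.2 hε) (right_mem_Icc.2 hε) hε
  simp only [add_zero, sub_zero] at this
  linarith

set_option maxHeartbeats 1000000 in
theorem boundary_error_ordering (μm μp K ε : ℝ) (hμ : μm < μp) (hK : 1 < K)
    (hε0 : 0 ≤ ε) (hε1 : ε ≤ (μp - μm) / 4)
    (hlogK : Real.log K ≤ (μp - μm - 2 * ε) ^ 2 / 2)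
    (hKε : (K + 1 / K + 2) * ε ≤ μp - μm) :
    Ebdy μm μp K (θrob μm μp K ε) ε ≤ Ebdy μm μp K (θnat μm μp K) ε ∧
    Ebdy μm μp K (θnat μm μp K) ε ≤ Ebdy μm μp K (θfair μm μp K) ε := by
  have hD : 0 < K ^ 2 - 1 := by nlinarith
  have hL : 0 < Real.log K := Real.log_pos hK
  set L := Real.log K with hLdef
  have hA : 0 < 2 * (K ^ 2 - 1) * L := by positivity
  set d := μp - μm with hd
  have hd0 : 0 < d := by linarith
  have hy0 : 0 ≤ d - 2 * ε := by linarith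
  set s := Real.sqrt (2 * (K ^ 2 - 1) * L + d ^ 2) with hsdef
  set r := Real.sqrt (2 * (K ^ 2 - 1) * L + (d - 2 * ε) ^ 2) with hrdef
  have hs : s ^ 2 = 2 * (K ^ 2 - 1) * L + d ^ 2 := Real.sq_sqrt (by positivity)
  have hr : r ^ 2 = 2 * (K ^ 2 - 1) * L + (d - 2 * ε) ^ 2 := Real.sq_sqrt (by positivity)
  have hds : d ≤ s := Real.le_sqrt_of_sq_le (by linarith)
  have hyr : d - 2 * ε ≤ r := Real.le_sqrt_of_sq_le (by linarith)
  -- `y ↦ √(A + y²)` is 1-Lipschitz.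
  have hsr : s ≤ r + 2 * ε := by
    refine le_of_sq_le_sq ?_ (by linarith)
    nlinarith
  have hn : (K ^ 2 - 1) * (θnat μm μp K - μm) = -d + K * s := by
    unfold θnat
    rw [← hd, ← hLdef, ← hsdef]
    field_simp
    ring
  have hρ : (K ^ 2 - 1) * (θrob μm μp K ε - ε - μm) = -(d - 2 * ε) + K * r := by
    unfold θrob
    rw [← hd, ← hLdef, ← hrdef]
    field_simp
    ring
  have hf : (K + 1) * (θfair μm μp K - μm) = d := by
    unfold θfair
    rw [← hd]
    field_simp
    ring
  set n := θnat μm μp K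
  set ρ := θrob μm μp K ε
  set f := θfair μm μp K
  have hfn : f ≤ n := by
    have : (K ^ 2 - 1) * (f - μm) ≤ (K ^ 2 - 1) * (n - μm) := by
      rw [hn]
      have : (K ^ 2 - 1) * (f - μm) = (K - 1) * d := by rw [← hf]; ring
      rw [this]
      nlinarith
    linarith [le_of_mul_le_mul_left this hD]
  have hnρ : n ≤ ρ := by
    have : (K ^ 2 - 1) * (n - μm) ≤ (K ^ 2 - 1) * (ρ - μm) := by
      have e : (K ^ 2 - 1) * (ρ - μm) = -(d - 2 * ε) + K * r + (K ^ 2 - 1) * ε := by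
        rw [← hρ]; ring
      rw [hn, e]
      nlinarith [mul_nonneg (sq_nonneg (K - 1)) hε0,
        mul_le_mul_of_nonneg_left hsr (by linarith : 0 ≤ K)]
    linarith [le_of_mul_le_mul_left this hD]
  have hQn := root_identity K L d (n - μm) s hK hs hn
  have hQρ := root_identity K L (d - 2 * ε) (ρ - ε - μm) r hK hr hρ
  have hρp : ρ - ε - μm ≤ d - 2 * ε := root_le K L _ _ r hK hy0 hlogK hr hρ
  -- The third hypothesis in the form `(K+1)² ε ≤ K (μ₊ - μ₋)`.
  have hKε' : (K + 1) ^ 2 * ε ≤ K * d := by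
    have h := mul_le_mul_of_nonneg_left hKε (by linarith : 0 ≤ K)
    have e : K * ((K + 1 / K + 2) * ε) = (K + 1) ^ 2 * ε := by
      field_simp
      ring
    rwa [e] at h
  have hfε : ε ≤ f - μm := by
    refine le_of_mul_le_mul_left (a := K * (K + 1)) ?_ (by positivity)
    have e : K * (K + 1) * (f - μm) = K * d := by rw [← hf]; ring
    rw [e]
    nlinarith
  constructor
  · refine Ebdy_le μm μp K ε n ρ hε0 hnρ fun θ ⟨h1, h2⟩ => ?_
    have hPM : phiP μp K (θ + ε) ≤ phiM μm (θ - ε) := by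
      rw [phiP_le_phiM_iff μm μp K _ _ hK, ← hLdef, ← hQρ]
      have a1 : (θ - ε - μm) ^ 2 ≤ (ρ - ε - μm) ^ 2 :=
        pow_le_pow_left₀ (by linarith) (by linarith) 2
      have a2 : (d - 2 * ε - (ρ - ε - μm)) ^ 2 ≤ (μp - (θ + ε)) ^ 2 :=
        pow_le_pow_left₀ (by linarith) (by linarith) 2
      linarith [mul_le_mul_of_nonneg_left a1 (sq_nonneg K), sub_sq_comm (θ + ε) μp]
    have hMP : phiM μm θ ≤ phiP μp K θ := by
      rw [phiM_le_phiP_iff μm μp K _ _ hK, ← hLdef, ← hQn]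
      have a1 : (n - μm) ^ 2 ≤ (θ - μm) ^ 2 :=
        pow_le_pow_left₀ (by linarith) (by linarith) 2
      have a2 : (μp - θ) ^ 2 ≤ (d - (n - μm)) ^ 2 :=
        pow_le_pow_left₀ (by linarith) (by linarith) 2
      linarith [mul_le_mul_of_nonneg_left a1 (sq_nonneg K), sub_sq_comm θ μp]
    linarith
  · refine Ebdy_le μm μp K ε f n hε0 hfn fun θ ⟨h1, h2⟩ => ?_
    refine diff_le_of_le_nat μm μp K ε θ hK hε0 ?_ (by linarith) ?_
    · -- The inequality is linear and increasing in `θ`, so its case `θ = θ_f` suffices.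
      have hff : d + (K ^ 2 - 1) * ε ≤ (K ^ 2 + 1) * (f - μm) := by
        refine le_of_mul_le_mul_left (a := K + 1) ?_ (by linarith)
        have e : (K + 1) * ((K ^ 2 + 1) * (f - μm)) = (K ^ 2 + 1) * d := by rw [← hf]; ring
        rw [e]
        linarith [mul_le_mul_of_nonneg_left hKε' (by linarith : 0 ≤ K - 1)]
      have hmono : (K ^ 2 + 1) * (f - μm) ≤ (K ^ 2 + 1) * (θ - μm) :=
        mul_le_mul_of_nonneg_left (by linarith) (by positivity)
      linarith
    · rw [← hLdef, ← hQn]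
      have a1 : (θ - μm) ^ 2 ≤ (n - μm) ^ 2 :=
        pow_le_pow_left₀ (by linarith) (by linarith) 2
      have a2 : (d - (n - μm)) ^ 2 ≤ (μp - θ) ^ 2 :=
        pow_le_pow_left₀ (by linarith) (by linarith) 2
      linarith [mul_le_mul_of_nonneg_left a1 (sq_nonneg K), sub_sq_comm θ μp]
end

section
/- (Theorem 6.4, second part) The fair threshold θ_f = μ₋ + (μ₊−μ₋)/(K+1) is the unique minimizer of the average distance to the decision boundary over [μ₋, μ₊]: for every θ ∈ [μ₋, μ₊] with θ ≠ θ_f, D(θ) > D(θ_f). Moreover D is strictly decreasing on [μ₋, θ_f] and strictly increasing on [θ_f, μ₊]. -/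
/-!
Let `F t = E|Z - t|` for a standard Gaussian `Z` (`gaussDist`). Standardising both Gaussians, and
using that `F` is even, gives
`D θ = (K * F ((μp - θ) / K) + F (θ - μm)) / 2`.
The weighted mean of the two arguments, with weights `K / (K + 1)` and `1 / (K + 1)`, is
`(μp - μm) / (K + 1)`, independently of `θ`, and both arguments equal that mean exactly at the
fair threshold. As `F` is strictly convex, Jensen's inequality makes the fair threshold the unique
minimiser of `D` over all of `ℝ`. Since `D` is also convex, it is strictly monotone on either side
of this minimiser.
-/

open Real MeasureTheory Set

/-- Average distance to the decision boundary of the threshold classifier at θ. -/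
noncomputable def avgDist (μm μp K θ : ℝ) : ℝ :=
  (1 / 2) * (∫ x : ℝ, |x - θ| * phiP μp K x) + (1 / 2) * (∫ x : ℝ, |x - θ| * phiM μm x)

/-- Mean absolute distance from `t` to a standard Gaussian variable. -/
noncomputable def gaussDist (t : ℝ) : ℝ := ∫ z : ℝ, |z - t| * phiM 0 z

lemma phiM_pos (m x : ℝ) : 0 < phiM m x := by
  unfold phiM
  positivity

lemma continuous_phiM (m : ℝ) : Continuous (phiM m) := by
  unfold phiM
  fun_prop

lemma integrable_abs_sub_mul_phiM (t : ℝ) : Integrable (fun z : ℝ => |z - t| * phiM 0 z) := by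
  have h1 : Integrable (fun z : ℝ => (z - t) * phiM 0 z) := by
    have ha := (integrable_mul_exp_neg_mul_sq (b := 1 / 2) (by norm_num)).const_mul
      (1 / Real.sqrt (2 * Real.pi))
    have hb := (integrable_exp_neg_mul_sq (b := 1 / 2) (by norm_num)).const_mul
      (t / Real.sqrt (2 * Real.pi))
    refine (ha.sub hb).congr (Filter.Eventually.of_forall fun z => ?_)
    have : -(z - 0) ^ 2 / 2 = -(1 / 2) * z ^ 2 := by ring
    simp only [phiM, Pi.sub_apply, this]
    ring
  refine h1.abs.congr (Filter.Eventually.of_forall fun z => ?_)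
  simp only [abs_mul, abs_of_pos (phiM_pos 0 z)]

/-- Convexity of `t ↦ |z - t|` holds for each `z`, and is strict at any `z` strictly between
`s` and `t`; the witness below is `z = a * s + b * t`. -/
lemma strictConvexOn_gaussDist : StrictConvexOn ℝ univ gaussDist := by
  refine ⟨convex_univ, fun s _ t _ hst a b ha hb hab => ?_⟩
  simp only [smul_eq_mul]
  have is := (integrable_abs_sub_mul_phiM s).const_mul a
  have it := (integrable_abs_sub_mul_phiM t).const_mul b
  have iu := integrable_abs_sub_mul_phiM (a * s + b * t)
  have key : 0 < ∫ z : ℝ, (a * (|z - s| * phiM 0 z) + b * (|z - t| * phiM 0 z)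
      - |z - (a * s + b * t)| * phiM 0 z) := by
    have hc := continuous_phiM 0
    refine integral_pos_of_integrable_nonneg_nonzero (x := a * s + b * t) (by fun_prop)
      ((is.add it).sub iu) (fun z => ?_) ?_
    · have h : |z - (a * s + b * t)| ≤ a * |z - s| + b * |z - t| := by
        have : z - (a * s + b * t) = a * (z - s) + b * (z - t) := by
          linear_combination -z * hab
        rw [this]
        refine (abs_add_le _ _).trans_eq ?_
        rw [abs_mul, abs_mul, abs_of_pos ha, abs_of_pos hb]
      have := mul_le_mul_of_nonneg_right h (phiM_pos 0 z).le
      simp only [Pi.zero_apply]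
      linarith
    · have hs : 0 < |a * s + b * t - s| := by
        rw [abs_pos]
        have : a * s + b * t - s = b * (t - s) := by linear_combination s * hab
        rw [this]
        exact mul_ne_zero hb.ne' (sub_ne_zero.2 hst.symm)
      have hp := phiM_pos 0 (a * s + b * t)
      simp only [sub_self, abs_zero, zero_mul, sub_zero]
      positivity
  rw [integral_sub (by exact is.add it) iu, integral_add is it, integral_const_mul, integral_const_mul]
    at key
  unfold gaussDist
  linarith

lemma gaussDist_neg (t : ℝ) : gaussDist (-t) = gaussDist t := by
  unfold gaussDist
  rw [← integral_neg_eq_self (fun z : ℝ => |z - t| * phiM 0 z)]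
  congr 1
  ext z
  rw [← abs_neg (-z - t)]
  simp only [phiM]
  ring_nf

lemma avgDist_eq {μm μp K : ℝ} (hK : 0 < K) (θ : ℝ) :
    avgDist μm μp K θ
      = (1 / 2) * (K * gaussDist ((μp - θ) / K)) + (1 / 2) * gaussDist (θ - μm) := by
  have hM : ∫ x : ℝ, |x - θ| * phiM μm x = gaussDist (θ - μm) := by
    unfold gaussDist
    rw [← integral_sub_right_eq_self (fun z : ℝ => |z - (θ - μm)| * phiM 0 z) μm]
    congr 1
    ext x
    simp only [phiM, sub_zero, sub_sub_sub_cancel_right]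
  have hP : ∫ x : ℝ, |x - θ| * phiP μp K x = K * gaussDist ((μp - θ) / K) := by
    have e : (μp - θ) / K = -((θ - μp) / K) := by ring
    rw [e, gaussDist_neg]
    unfold gaussDist
    have h := Measure.integral_comp_div (fun z : ℝ => |z - (θ - μp) / K| * phiM 0 z) K
    rw [abs_of_pos hK, smul_eq_mul] at h
    rw [← h, ← integral_sub_right_eq_self
      (fun x : ℝ => |x / K - (θ - μp) / K| * phiM 0 (x / K)) μp]
    congr 1
    ext x
    have h1 : (x - μp) / K - (θ - μp) / K = (x - θ) / K := by ring
    have h2 : -((x - μp) / K - 0) ^ 2 / 2 = -(x - μp) ^ 2 / (2 * K ^ 2) := by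
      field_simp
      ring
    rw [h1, abs_div, abs_of_pos hK]
    simp only [phiM, phiP, h2]
    field_simp
  rw [avgDist, hM, hP]

lemma convexOn_avgDist {μm μp K : ℝ} (hK : 0 < K) : ConvexOn ℝ univ (avgDist μm μp K) := by
  refine ⟨convex_univ, fun x _ y _ a b ha hb hab => ?_⟩
  have hF := strictConvexOn_gaussDist.convexOn.2
  have h1 := hF (mem_univ ((μp - x) / K)) (mem_univ ((μp - y) / K)) ha hb hab
  have h2 := hF (mem_univ (x - μm)) (mem_univ (y - μm)) ha hb hab
  simp only [smul_eq_mul, avgDist_eq hK] at *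
  have e1 : (μp - (a * x + b * y)) / K = a * ((μp - x) / K) + b * ((μp - y) / K) := by
    field_simp
    linear_combination -μp * hab
  have e2 : a * x + b * y - μm = a * (x - μm) + b * (y - μm) := by
    linear_combination μm * hab
  rw [e1, e2]
  have h3 := mul_le_mul_of_nonneg_left h1 hK.le
  linarith

/-- The fair threshold is the unique minimiser over the whole line, by strict Jensen. -/
lemma avgDist_θfair_lt {μm μp K : ℝ} (hK : 0 < K) {θ : ℝ} (hθ : θ ≠ θfair μm μp K) :
    avgDist μm μp K (θfair μm μp K) < avgDist μm μp K θ := by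
  have hK1 : 0 < K + 1 := by linarith
  have hne : (μp - θ) / K ≠ θ - μm := by
    intro h
    apply hθ
    unfold θfair
    field_simp at h ⊢
    linarith
  have hJ := strictConvexOn_gaussDist.2 (mem_univ ((μp - θ) / K)) (mem_univ (θ - μm)) hne
    (show 0 < K / (K + 1) by positivity) (show 0 < 1 / (K + 1) by positivity) (by field_simp)
  simp only [smul_eq_mul] at hJ
  have e0 : K / (K + 1) * ((μp - θ) / K) + 1 / (K + 1) * (θ - μm) = (μp - μm) / (K + 1) := by
    field_simp
    ring
  have e1 : (μp - θfair μm μp K) / K = (μp - μm) / (K + 1) := by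
    unfold θfair
    field_simp
    ring
  have e2 : θfair μm μp K - μm = (μp - μm) / (K + 1) := by
    unfold θfair
    ring
  rw [e0] at hJ
  rw [avgDist_eq hK, avgDist_eq hK, e1, e2]
  have h := mul_lt_mul_of_pos_left hJ hK1
  have e3 : (K + 1) * (K / (K + 1) * gaussDist ((μp - θ) / K) + 1 / (K + 1) * gaussDist (θ - μm))
      = K * gaussDist ((μp - θ) / K) + gaussDist (θ - μm) := by
    field_simp
  rw [e3] at h
  linarith

/-- Moving from `x` towards the fair threshold strictly decreases the average distance. -/
lemma avgDist_lt_of_mem_segment {μm μp K : ℝ} (hK : 0 < K) {x y : ℝ}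
    (hy : y ∈ segment ℝ x (θfair μm μp K)) (hxy : y ≠ x) :
    avgDist μm μp K y < avgDist μm μp K x := by
  obtain ⟨a, b, ha, hb, hab, rfl⟩ := hy
  have hx : x ≠ θfair μm μp K := by
    intro h
    apply hxy
    rw [← h, ← add_smul, hab, one_smul]
  have hb' : 0 < b := by
    refine lt_of_le_of_ne hb fun h => hxy ?_
    have : a = 1 := by linarith
    rw [← h, this, zero_smul, one_smul, add_zero]
  have hc := (convexOn_avgDist (μm := μm) (μp := μp) hK).2 (mem_univ x)
    (mem_univ (θfair μm μp K)) ha hb hab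
  have hlt := mul_lt_mul_of_pos_left (avgDist_θfair_lt hK hx) hb'
  refine hc.trans_lt ?_
  simp only [smul_eq_mul]
  calc _ < a * avgDist μm μp K x + b * avgDist μm μp K x := by linarith
    _ = avgDist μm μp K x := by rw [← add_mul, hab, one_mul]

theorem fair_threshold_minimizes_avg_distance (μm μp K : ℝ) (hμ : μm < μp) (hK : 1 < K) :
    (∀ θ ∈ Icc μm μp, θ ≠ θfair μm μp K →
      avgDist μm μp K (θfair μm μp K) < avgDist μm μp K θ) ∧
    StrictAntiOn (fun θ => avgDist μm μp K θ) (Icc μm (θfair μm μp K)) ∧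
    StrictMonoOn (fun θ => avgDist μm μp K θ) (Icc (θfair μm μp K) μp) := by
  have hK0 : 0 < K := by linarith
  refine ⟨fun θ _ hθ => avgDist_θfair_lt hK0 hθ, fun x hx y hy hxy => ?_,
    fun x hx y hy hxy => ?_⟩
  · refine avgDist_lt_of_mem_segment hK0 ?_ hxy.ne'
    rw [segment_eq_Icc hx.2]
    exact ⟨hxy.le, hy.2⟩
  · refine avgDist_lt_of_mem_segment hK0 ?_ hxy.ne
    rw [segment_symm, segment_eq_Icc hy.1]
    exact ⟨hx.1, hxy.le⟩
end
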